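/- Let (T₀, T̃₀) be a joint pair of closed abstract Friedrichs operators on a complex Hilbert space H, with minimal domain W₀ and graph space W. Then the graph space decomposes as the direct sum W = W₀ ∔ ker T₁ ∔ ker T̃₁ (i.e. W₀ + ker T₁ + ker T̃₁ = W and the sum is direct). -/

import Mathlib

open LinearPMap
open scoped LinearPMap

noncomputable section

variable {H : Type*} [NormedAddCommGroup H] [InnerProductSpace ℂ H] [CompleteSpace H]

local notation "⟪" x ", " y "⟫" => @inner ℂ _ _ x y

/-- Conditions (T1)–(T2) for a pair of operators with common dense domain. -/
structure IsPreFriedrichsPair (T Tt : H →ₗ.[ℂ] H) : Prop where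
  dom_eq : T.domain = Tt.domain
  dense' : Dense (T.domain : Set H)
  t1 : ∀ (φ : T.domain) (ψ : Tt.domain), ⟪T φ, (ψ : H)⟫ = ⟪(φ : H), Tt ψ⟫
  t2 : ∃ c : ℝ, 0 < c ∧ ∀ φ : (T + Tt).domain, ‖(T + Tt) φ‖ ≤ c * ‖(φ : H)‖

/-- A joint pair of abstract Friedrichs operators: (T1)–(T3). -/
structure IsFriedrichsPair (T Tt : H →ₗ.[ℂ] H) extends IsPreFriedrichsPair T Tt : Prop where
  t3 : ∃ μ₀ : ℝ, 0 < μ₀ ∧ ∀ φ : (T + Tt).domain,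
        2 * μ₀ * ‖(φ : H)‖ ^ 2 ≤ (⟪(T + Tt) φ, (φ : H)⟫).re

/-- The kernel of a partially defined operator, as a submodule of the ambient space. -/
def pKer (f : H →ₗ.[ℂ] H) : Submodule ℂ H :=
  (LinearMap.ker f.toFun).map f.domain.subtype

/-!
Let `S` be the bounded self-adjoint coercive extension of `T₀ + T̃₀`. Then `T₁` and `T̃₁` have the
same domain and add up to `S` there, so `T̃₁` acts on `W₀` as `T̃₀`, on `ker T₁` as `S`, and on
`ker T̃₁` as zero. Coercivity makes the range of `T̃₀` closed, hence equal to `(ker T₁)ᗮ`, and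
Lax–Milgram on `ker T₁` gives `H = S (ker T₁) ∔ (ker T₁)ᗮ`. Splitting `T̃₁ u` accordingly as
`S ν + T̃₀ φ` leaves `u - φ - ν` in `ker T̃₁`, and uniqueness of the splitting gives directness.
-/

section NormedSpace

variable {𝕜 E F : Type*} [NormedField 𝕜] [NormedAddCommGroup E] [NormedSpace 𝕜 E]
  [NormedAddCommGroup F] [NormedSpace 𝕜 F] [CompleteSpace F] {f : E →ₗ.[𝕜] F}

/-- The continuous extension to the whole space of a densely defined bounded operator.
It is a junk value when the domain is not dense or the operator is not bounded. -/
def boundedExtension (f : E →ₗ.[𝕜] F) : E →L[𝕜] F :=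
  f.toFun.extendOfNorm f.domain.subtype

lemma boundedExtension_apply (hd : Dense (f.domain : Set E))
    (hb : ∃ c : ℝ, ∀ x : f.domain, ‖f x‖ ≤ c * ‖(x : E)‖) (x : f.domain) :
    boundedExtension f x = f x :=
  LinearMap.extendOfNorm_eq hd.denseRange_val hb x

lemma isClosed_range_of_le_norm [CompleteSpace E] (hf : f.IsClosed) {c : ℝ} (hc : 0 < c)
    (hle : ∀ x : f.domain, c * ‖(x : E)‖ ≤ ‖f x‖) :
    IsClosed (LinearMap.range f.toFun : Set F) := by
  have : CompleteSpace f.graph := hf.completeSpace_coe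
  let snd : f.graph →L[𝕜] F := (ContinuousLinearMap.snd 𝕜 E F).comp f.graph.subtypeL
  have snd_antilipschitz : AntilipschitzWith (max c⁻¹ 1).toNNReal snd := by
    refine AddMonoidHomClass.antilipschitz_of_bound snd ?_
    rintro ⟨⟨_, _⟩, hg⟩
    obtain ⟨x, rfl, rfl⟩ := f.mem_graph_iff.1 hg
    rw [Real.coe_toNNReal _ (zero_le_one.trans (le_max_right _ _)),
      max_mul_of_nonneg _ _ (norm_nonneg _)]
    refine max_le_max ?_ (one_mul _).ge
    exact (le_inv_mul_iff₀ hc).2 (hle x)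
  have range_snd : Set.range snd = LinearMap.range f.toFun := by
    rw [← f.graph_map_snd_eq_range]
    ext y
    simp [snd]
  exact range_snd ▸ snd_antilipschitz.isClosed_range snd.uniformContinuous

end NormedSpace

section InnerProductSpace

variable {𝕜 E : Type*} [RCLike 𝕜] [NormedAddCommGroup E] [InnerProductSpace 𝕜 E]

lemma isFormalAdjoint_add_self {A B : E →ₗ.[𝕜] E} (h : A.IsFormalAdjoint B) :
    (A + B).IsFormalAdjoint (A + B) := by
  rintro ⟨x, hxA, hxB⟩ ⟨y, hyA, hyB⟩
  rw [LinearPMap.add_apply, LinearPMap.add_apply, inner_add_left, inner_add_right,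
    h ⟨x, hxA⟩ ⟨y, hyB⟩, h.symm ⟨x, hxB⟩ ⟨y, hyA⟩, add_comm]

section BoundedExtension

variable [CompleteSpace E] {f : E →ₗ.[𝕜] E} (hd : Dense (f.domain : Set E))
  (hb : ∃ c : ℝ, ∀ x : f.domain, ‖f x‖ ≤ c * ‖(x : E)‖)
include hd hb

lemma boundedExtension_isSymmetric (hf : f.IsFormalAdjoint f) :
    (boundedExtension f : E →ₗ[𝕜] E).IsSymmetric := by
  refine hd.denseRange_val.induction_on₂ (isClosed_eq (by fun_prop) (by fun_prop)) fun x y ↦ ?_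
  simpa only [ContinuousLinearMap.coe_coe, boundedExtension_apply hd hb] using hf x y

lemma le_re_inner_boundedExtension {c : ℝ}
    (hc : ∀ x : f.domain, c * ‖(x : E)‖ ^ 2 ≤ RCLike.re (inner 𝕜 (f x) (x : E))) (x : E) :
    c * ‖x‖ ^ 2 ≤ RCLike.re (inner 𝕜 (boundedExtension f x) x) := by
  refine hd.denseRange_val.induction_on x (isClosed_le (by fun_prop) (by fun_prop)) fun y ↦ ?_
  simpa only [boundedExtension_apply hd hb] using hc y

end BoundedExtension

section Coercive

variable {S : E →L[𝕜] E} {K : Submodule 𝕜 E} {c : ℝ} (hc : 0 < c)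
  (hS : ∀ x ∈ K, c * ‖x‖ ^ 2 ≤ ‖inner 𝕜 (S x) x‖)
include hc hS

lemma map_sup_orthogonal_eq_top_of_le_norm_inner [CompleteSpace K] :
    K.map (S : E →ₗ[𝕜] E) ⊔ Kᗮ = ⊤ := by
  let compression : K →L[𝕜] K := K.orthogonalProjectionOnto.comp (S.comp K.subtypeL)
  have compression_isUnit : IsUnit compression := by
    refine ContinuousLinearMap.isUnit_of_forall_le_norm_inner_map compression
      (c := c.toNNReal) (Real.toNNReal_pos.2 hc) fun x ↦ ?_
    have inner_compression : inner 𝕜 (compression x) x = inner 𝕜 (S x) (x : E) :=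
      Submodule.inner_orthogonalProjectionOnto_eq_of_mem_right x (S x)
    rw [Real.coe_toNNReal _ hc.le, inner_compression, mul_comm]
    exact hS x x.2
  refine Submodule.eq_top_iff'.2 fun z ↦ ?_
  obtain ⟨x, hx⟩ := (ContinuousLinearMap.isUnit_iff_bijective.1 compression_isUnit).2
    (K.orthogonalProjectionOnto z)
  have sub_mem : z - S x ∈ Kᗮ := by
    rw [← Submodule.orthogonalProjectionOnto_eq_zero_iff, _root_.map_sub, sub_eq_zero]
    exact hx.symm
  exact Submodule.mem_sup.2 ⟨S x, Submodule.mem_map_of_mem x.2, z - S x, sub_mem, by abel⟩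

lemma eq_zero_of_map_mem_orthogonal_of_le_norm_inner {x : E} (hx : x ∈ K) (hSx : S x ∈ Kᗮ) :
    x = 0 := by
  have h := hS x hx
  rw [K.inner_left_of_mem_orthogonal hx hSx, norm_zero] at h
  have : ‖x‖ ^ 2 ≤ 0 := nonpos_of_mul_nonpos_right h hc
  simpa using this.antisymm (sq_nonneg _)

end Coercive

end InnerProductSpace

section FriedrichsPair

variable {T Tt : H →ₗ.[ℂ] H}

omit [CompleteSpace H] in
lemma pKer_le_domain (f : H →ₗ.[ℂ] H) : pKer f ≤ f.domain :=
  Submodule.map_subtype_le _ _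

omit [CompleteSpace H] in
lemma mem_pKer_iff {f : H →ₗ.[ℂ] H} (x : f.domain) : (x : H) ∈ pKer f ↔ f x = 0 := by
  simp [pKer, LinearMap.mem_ker]

lemma pKer_adjoint_eq_orthogonal_range (hd : Dense (T.domain : Set H)) :
    pKer (T†) = (LinearMap.range T.toFun)ᗮ := by
  ext x
  rw [Submodule.mem_orthogonal']
  constructor
  · rintro hx _ ⟨φ, rfl⟩
    have adjoint_eq_zero : T† ⟨x, pKer_le_domain _ hx⟩ = 0 := (mem_pKer_iff _).1 hx
    have h := adjoint_isFormalAdjoint hd ⟨x, pKer_le_domain _ hx⟩ φ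
    rwa [adjoint_eq_zero, inner_zero_left, eq_comm] at h
  · intro hx
    have inner_eq (φ : T.domain) : ⟪(0 : H), (φ : H)⟫ = ⟪x, T φ⟫ := by
      rw [inner_zero_left]
      exact (hx _ ⟨φ, rfl⟩).symm
    have x_mem : x ∈ T†.domain := mem_adjoint_domain_of_exists x ⟨0, inner_eq⟩
    exact (mem_pKer_iff ⟨x, x_mem⟩).2 (adjoint_apply_eq hd ⟨x, x_mem⟩ inner_eq)

namespace IsPreFriedrichsPair

omit [CompleteSpace H] in
lemma symm (h : IsPreFriedrichsPair T Tt) : IsPreFriedrichsPair Tt T where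
  dom_eq := h.dom_eq.symm
  dense' := h.dom_eq ▸ h.dense'
  t1 := IsFormalAdjoint.symm h.t1
  t2 := add_comm T Tt ▸ h.t2

omit [CompleteSpace H] in
lemma dense_add_domain (h : IsPreFriedrichsPair T Tt) : Dense ((T + Tt).domain : Set H) := by
  rw [LinearPMap.add_domain, ← h.dom_eq, inf_idem]
  exact h.dense'

omit [CompleteSpace H] in
lemma exists_norm_add_le (h : IsPreFriedrichsPair T Tt) :
    ∃ c : ℝ, ∀ φ : (T + Tt).domain, ‖(T + Tt) φ‖ ≤ c * ‖(φ : H)‖ :=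
  h.t2.imp fun _ ↦ And.right

lemma boundedExtension_add_apply (h : IsPreFriedrichsPair T Tt) {x : H}
    (hx : x ∈ T.domain) (hx' : x ∈ Tt.domain) :
    boundedExtension (T + Tt) x = T ⟨x, hx⟩ + Tt ⟨x, hx'⟩ :=
  boundedExtension_apply h.dense_add_domain h.exists_norm_add_le ⟨x, hx, hx'⟩

lemma boundedExtension_add_isSymmetric (h : IsPreFriedrichsPair T Tt) :
    (boundedExtension (T + Tt) : H →ₗ[ℂ] H).IsSymmetric :=
  boundedExtension_isSymmetric h.dense_add_domain h.exists_norm_add_le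
    (isFormalAdjoint_add_self h.t1)

lemma le_adjoint (h : IsPreFriedrichsPair T Tt) : Tt ≤ T† :=
  IsFormalAdjoint.le_adjoint h.dense' h.t1

lemma inner_boundedExtension_sub_adjoint (h : IsPreFriedrichsPair T Tt) (x : Tt†.domain)
    (φ : T.domain) : ⟪boundedExtension (T + Tt) x - Tt† x, (φ : H)⟫ = ⟪(x : H), T φ⟫ := by
  have hφ : (φ : H) ∈ Tt.domain := h.dom_eq.le φ.2
  have inner_adjoint : ⟪Tt† x, (φ : H)⟫ = ⟪(x : H), Tt ⟨φ, hφ⟩⟫ :=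
    adjoint_isFormalAdjoint h.symm.dense' x ⟨φ, hφ⟩
  have inner_extension : ⟪boundedExtension (T + Tt) x, (φ : H)⟫ =
      ⟪(x : H), boundedExtension (T + Tt) φ⟫ := h.boundedExtension_add_isSymmetric x φ
  rw [inner_sub_left, inner_extension, h.boundedExtension_add_apply φ.2 hφ, inner_add_right,
    inner_adjoint, add_sub_cancel_right]

lemma adjoint_domain_le (h : IsPreFriedrichsPair T Tt) : Tt†.domain ≤ T†.domain := fun x hx ↦
  mem_adjoint_domain_of_exists x ⟨_, h.inner_boundedExtension_sub_adjoint ⟨x, hx⟩⟩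

lemma adjoint_apply (h : IsPreFriedrichsPair T Tt) {x : H} (hx : x ∈ T†.domain)
    (hx' : x ∈ Tt†.domain) :
    T† ⟨x, hx⟩ = boundedExtension (T + Tt) x - Tt† ⟨x, hx'⟩ :=
  adjoint_apply_eq h.dense' ⟨x, hx⟩ (h.inner_boundedExtension_sub_adjoint ⟨x, hx'⟩)

lemma adjoint_apply_of_mem_pKer (h : IsPreFriedrichsPair T Tt) {ν : H} (hν : ν ∈ pKer (Tt†))
    (hν' : ν ∈ T†.domain) : T† ⟨ν, hν'⟩ = boundedExtension (T + Tt) ν := by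
  have adjoint_eq_zero : Tt† ⟨ν, pKer_le_domain _ hν⟩ = 0 := (mem_pKer_iff _).1 hν
  rw [h.adjoint_apply hν' (pKer_le_domain _ hν), adjoint_eq_zero, sub_zero]

theorem sup_le_adjoint_domain (h : IsPreFriedrichsPair T Tt) :
    T.domain ⊔ pKer (Tt†) ⊔ pKer (T†) ≤ Tt†.domain :=
  sup_le (sup_le h.symm.le_adjoint.1 (pKer_le_domain _))
    ((pKer_le_domain _).trans h.symm.adjoint_domain_le)

end IsPreFriedrichsPair

namespace IsFriedrichsPair

omit [CompleteSpace H] in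
lemma symm (h : IsFriedrichsPair T Tt) : IsFriedrichsPair Tt T where
  toIsPreFriedrichsPair := h.toIsPreFriedrichsPair.symm
  t3 := add_comm T Tt ▸ h.t3

lemma exists_le_norm_inner_boundedExtension_add (h : IsFriedrichsPair T Tt) :
    ∃ c : ℝ, 0 < c ∧ ∀ x, c * ‖x‖ ^ 2 ≤ ‖⟪boundedExtension (T + Tt) x, x⟫‖ := by
  obtain ⟨μ, hμ, hle⟩ := h.t3
  refine ⟨2 * μ, by positivity, fun x ↦ le_trans ?_ (RCLike.re_le_norm _)⟩
  exact le_re_inner_boundedExtension h.dense_add_domain h.exists_norm_add_le hle x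

omit [CompleteSpace H] in
lemma exists_le_re_inner (h : IsFriedrichsPair T Tt) :
    ∃ μ : ℝ, 0 < μ ∧ ∀ φ : T.domain, μ * ‖(φ : H)‖ ^ 2 ≤ (⟪T φ, (φ : H)⟫).re := by
  obtain ⟨μ, hμ, hle⟩ := h.t3
  refine ⟨μ, hμ, fun φ ↦ ?_⟩
  have hφ : (φ : H) ∈ Tt.domain := h.dom_eq.le φ.2
  have re_inner_eq : (⟪Tt ⟨φ, hφ⟩, (φ : H)⟫).re = (⟪T φ, (φ : H)⟫).re := by
    rw [h.t1 φ ⟨φ, hφ⟩]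
    exact inner_re_symm (𝕜 := ℂ) _ _
  have re_inner_add : (⟪(T + Tt) ⟨φ, φ.2, hφ⟩, (φ : H)⟫).re =
      (⟪T φ, (φ : H)⟫).re + (⟪Tt ⟨φ, hφ⟩, (φ : H)⟫).re := by
    rw [LinearPMap.add_apply, inner_add_left, Complex.add_re]
  linarith [hle ⟨φ, φ.2, hφ⟩]

omit [CompleteSpace H] in
lemma exists_le_norm (h : IsFriedrichsPair T Tt) :
    ∃ μ : ℝ, 0 < μ ∧ ∀ φ : T.domain, μ * ‖(φ : H)‖ ≤ ‖T φ‖ := by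
  obtain ⟨μ, hμ, hle⟩ := h.exists_le_re_inner
  refine ⟨μ, hμ, fun φ ↦ ?_⟩
  rcases (norm_nonneg (φ : H)).eq_or_lt with norm_eq_zero | norm_pos
  · simp [← norm_eq_zero]
  · refine le_of_mul_le_mul_right ?_ norm_pos
    calc μ * ‖(φ : H)‖ * ‖(φ : H)‖ = μ * ‖(φ : H)‖ ^ 2 := by ring
      _ ≤ (⟪T φ, (φ : H)⟫).re := hle φ
      _ ≤ ‖T φ‖ * ‖(φ : H)‖ := re_inner_le_norm (𝕜 := ℂ) _ _

lemma orthogonal_pKer_adjoint (h : IsFriedrichsPair T Tt) (hT : T.IsClosed) :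
    (pKer (T†))ᗮ = LinearMap.range T.toFun := by
  obtain ⟨μ, hμ, hle⟩ := h.exists_le_norm
  have : CompleteSpace (LinearMap.range T.toFun) :=
    (isClosed_range_of_le_norm hT hμ hle).completeSpace_coe
  rw [pKer_adjoint_eq_orthogonal_range h.dense', Submodule.orthogonal_orthogonal]

lemma map_pKer_adjoint_sup_range (h : IsFriedrichsPair T Tt) (hTt : Tt.IsClosed) :
    (pKer (Tt†)).map (boundedExtension (T + Tt) : H →ₗ[ℂ] H) ⊔ LinearMap.range Tt.toFun = ⊤ := by
  obtain ⟨c, hc, hle⟩ := h.exists_le_norm_inner_boundedExtension_add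
  have : CompleteSpace (pKer (Tt†)) := by
    rw [pKer_adjoint_eq_orthogonal_range h.symm.dense']
    infer_instance
  rw [← h.symm.orthogonal_pKer_adjoint hTt]
  exact map_sup_orthogonal_eq_top_of_le_norm_inner hc fun x _ ↦ hle x

theorem adjoint_domain_le_sup (h : IsFriedrichsPair T Tt) (hTt : Tt.IsClosed) :
    Tt†.domain ≤ T.domain ⊔ pKer (Tt†) ⊔ pKer (T†) := by
  intro u hu
  have hu' : u ∈ T†.domain := h.adjoint_domain_le hu
  obtain ⟨_, ⟨ν, hν, rfl⟩, _, ⟨φ, rfl⟩, hsplit⟩ := Submodule.mem_sup.1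
    (h.map_pKer_adjoint_sup_range hTt ▸ Submodule.mem_top (x := T† ⟨u, hu'⟩))
  have hν' : ν ∈ T†.domain := h.adjoint_domain_le (pKer_le_domain _ hν)
  have hφ : (φ : H) ∈ T.domain := h.dom_eq.ge φ.2
  have hφ' : (φ : H) ∈ T†.domain := h.le_adjoint.1 φ.2
  have adjoint_φ : T† ⟨φ, hφ'⟩ = Tt φ := (h.le_adjoint.2 rfl).symm
  have remainder_mem : u - φ - ν ∈ pKer (T†) := by
    refine (mem_pKer_iff (⟨u, hu'⟩ - ⟨φ, hφ'⟩ - ⟨ν, hν'⟩ : T†.domain)).2 ?_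
    rw [LinearPMap.map_sub, LinearPMap.map_sub, adjoint_φ, h.adjoint_apply_of_mem_pKer hν hν',
      ← hsplit]
    exact sub_eq_zero.2 (add_sub_cancel_right _ _)
  have u_eq : u = φ + ν + (u - φ - ν) := by abel
  rw [u_eq]
  exact Submodule.add_mem_sup (Submodule.add_mem_sup hφ hν) remainder_mem

theorem eq_zero_of_add_add_eq_zero (h : IsFriedrichsPair T Tt) {u ν ν' : H} (hu : u ∈ Tt.domain)
    (hν : ν ∈ pKer (Tt†)) (hν' : ν' ∈ pKer (T†)) (hsum : u + ν + ν' = 0) : ν = 0 := by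
  have hu_adj : u ∈ T†.domain := h.le_adjoint.1 hu
  have hν_adj : ν ∈ T†.domain := h.adjoint_domain_le (pKer_le_domain _ hν)
  have adjoint_u : T† ⟨u, hu_adj⟩ = Tt ⟨u, hu⟩ := (h.le_adjoint.2 rfl).symm
  have u_add_ν_mem : u + ν ∈ pKer (T†) := by
    rw [eq_neg_of_add_eq_zero_left hsum]
    exact neg_mem hν'
  have adjoint_add : Tt ⟨u, hu⟩ + boundedExtension (T + Tt) ν = 0 := by
    rw [← adjoint_u, ← h.adjoint_apply_of_mem_pKer hν hν_adj, ← LinearPMap.map_add]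
    exact (mem_pKer_iff (⟨u, hu_adj⟩ + ⟨ν, hν_adj⟩ : T†.domain)).1 u_add_ν_mem
  have extension_mem : boundedExtension (T + Tt) ν ∈ (pKer (Tt†))ᗮ := by
    rw [pKer_adjoint_eq_orthogonal_range h.symm.dense', eq_neg_of_add_eq_zero_right adjoint_add]
    exact neg_mem (Submodule.le_orthogonal_orthogonal _ ⟨⟨u, hu⟩, rfl⟩)
  obtain ⟨c, hc, hle⟩ := h.exists_le_norm_inner_boundedExtension_add
  exact eq_zero_of_map_mem_orthogonal_of_le_norm_inner hc (fun x _ ↦ hle x) hν extension_mem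

end IsFriedrichsPair

end FriedrichsPair

/-- For a joint pair `(T₀, T̃₀)` of closed abstract Friedrichs operators, the
graph space decomposes as `W = W₀ ∔ ker T₁ ∔ ker T̃₁` (with `T₁ := T̃₀*`, `T̃₁ := T₀*`,
`W₀ = dom T₀` and `W = dom T₁`): the three subspaces sum to `W` and the sum is direct. -/
theorem statement9 (T Tt : H →ₗ.[ℂ] H) (hF : IsFriedrichsPair T Tt)
    (hT : T.IsClosed) (hTt : Tt.IsClosed) :
    (T.domain ⊔ pKer (Tt†) ⊔ pKer (T†) = (Tt†).domain) ∧
    (∀ u₀ ∈ T.domain, ∀ ν ∈ pKer (Tt†), ∀ ν' ∈ pKer (T†),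
      u₀ + ν + ν' = 0 → u₀ = 0 ∧ ν = 0 ∧ ν' = 0) := by
  refine ⟨le_antisymm hF.sup_le_adjoint_domain (hF.adjoint_domain_le_sup hTt), ?_⟩
  intro u₀ hu₀ ν hν ν' hν' hsum
  have ν_eq_zero : ν = 0 := hF.eq_zero_of_add_add_eq_zero (hF.dom_eq.le hu₀) hν hν' hsum
  have ν'_eq_zero : ν' = 0 :=
    hF.symm.eq_zero_of_add_add_eq_zero hu₀ hν' hν (by rwa [add_right_comm])
  refine ⟨?_, ν_eq_zero, ν'_eq_zero⟩
  rwa [ν_eq_zero, ν'_eq_zero, add_zero, add_zero] at hsum
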